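/- Let γ > 1, A0 > 0, B0 > 0 and κ2 ≠ 0, and set r♯ = |κ2|/√(2 B0). Define on (r♯, ∞): U1 ≡ 0, U2(r) = κ2/r and ρ(r) = ((γ−1)/(A0 γ))^{1/(γ−1)} (B0 − κ2²/(2r²))^{1/(γ−1)}. Then ρ(r) > 0 on (r♯, ∞) and (ρ, U1, U2) satisfies the radially symmetric steady Euler system on every compact subinterval of (r♯, ∞). Moreover, setting r_c = √((γ+1)/(2(γ−1)B0)) · |κ2|, one has r♯ < r_c, and the total Mach number squared M1² + M2² = U2²/c² equals 1 at r = r_c, is < 1 for r > r_c, and is > 1 for r♯ < r < r_c. -/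

import Mathlib

open Real Set

/-!
A swirling flow without radial velocity solves the Euler system as soon as its specific enthalpy
`h`, which satisfies `dh = dp / ρ`, balances the centrifugal force: `h' = U2 ^ 2 / r`. For
`U2 = κ / r` this integrates to Bernoulli's law `h = B - κ ^ 2 / (2 * r ^ 2)`, and the density is
recovered from `h`. Since the squared sound speed is `(γ - 1) * h`, writing `h` and `U2 ^ 2` through
the vacuum radius `rs` and the sonic radius `rc` gives
`M1 ^ 2 + M2 ^ 2 = (rc ^ 2 - rs ^ 2) / (r ^ 2 - rs ^ 2)`, which is compared with `1` at sight.
-/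

/-- The density at which a polytropic gas with pressure law `p = A * ρ ^ γ` has specific enthalpy
`h`, that is, the solution of `A * γ * ρ ^ (γ - 1) / (γ - 1) = h`. -/
noncomputable def polytropicDensity (γ A h : ℝ) : ℝ :=
  ((γ - 1) / (A * γ)) ^ ((1 : ℝ) / (γ - 1)) * h ^ ((1 : ℝ) / (γ - 1))

/-- The sound speed `√(dp/dρ)` of a polytropic gas with pressure law `p = A * ρ ^ γ`. -/
noncomputable def soundSpeed (γ A ρ : ℝ) : ℝ :=
  √(A * γ) * ρ ^ ((γ - 1) / 2)

/-- The square of the total Mach number, `M1 ^ 2 + M2 ^ 2`, of a polytropic gas of density `ρ`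
moving with radial velocity `u₁` and tangential velocity `u₂`. -/
noncomputable def machSq (γ A ρ u₁ u₂ : ℝ) : ℝ :=
  (u₁ ^ 2 + u₂ ^ 2) / soundSpeed γ A ρ ^ 2

/-- The radially symmetric steady Euler system for a polytropic gas, at the radius `r`. The
derivative of the pressure `A * ρ ^ γ` is written out by the chain rule. -/
def IsRadialSteadyEulerAt (γ A : ℝ) (ρ U1 U2 : ℝ → ℝ) (r : ℝ) : Prop :=
  ∃ dρ dU1 dU2 : ℝ,
    HasDerivAt ρ dρ r ∧ HasDerivAt U1 dU1 r ∧ HasDerivAt U2 dU2 r ∧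
    dρ * U1 r + ρ r * dU1 + ρ r * U1 r / r = 0 ∧
    U1 r * dU1 + (1 / ρ r) * (A * γ * ρ r ^ (γ - 1) * dρ) - U2 r ^ 2 / r = 0 ∧
    U1 r * dU2 + U1 r * U2 r / r = 0

/-- The specific enthalpy that Bernoulli's law with constant `B` assigns to the circulatory
velocity `κ / r`. -/
noncomputable def circulatoryEnthalpy (B κ r : ℝ) : ℝ :=
  B - κ ^ 2 / (2 * r ^ 2)

/-- The radius `r♯` at which the enthalpy of the circulatory flow, and with it the density,
vanishes. -/
noncomputable def vacuumRadius (B κ : ℝ) : ℝ :=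
  |κ| / √(2 * B)

/-- The radius `r_c` at which the circulatory flow has total Mach number `1`. -/
noncomputable def sonicRadius (γ B κ : ℝ) : ℝ :=
  √((γ + 1) / (2 * (γ - 1) * B)) * |κ|

section PolytropicGas

variable {γ A h ρ : ℝ}

theorem polytropicDensity_pos (hγ : 1 < γ) (hA : 0 < A) (hh : 0 < h) :
    0 < polytropicDensity γ A h := by
  have : 0 < γ - 1 := sub_pos.mpr hγ
  unfold polytropicDensity
  positivity

theorem polytropicDensity_rpow (hγ : 1 < γ) (hA : 0 < A) (hh : 0 ≤ h) :
    polytropicDensity γ A h ^ (γ - 1) = (γ - 1) / (A * γ) * h := by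
  have hγ' : 0 < γ - 1 := sub_pos.mpr hγ
  have hK : 0 ≤ (γ - 1) / (A * γ) := by positivity
  rw [polytropicDensity, mul_rpow (by positivity) (by positivity), one_div,
    rpow_inv_rpow hK hγ'.ne', rpow_inv_rpow hh hγ'.ne']

theorem hasDerivAt_polytropicDensity (hh : h ≠ 0) :
    HasDerivAt (polytropicDensity γ A) (polytropicDensity γ A h / ((γ - 1) * h)) h := by
  have hderiv := (hasDerivAt_rpow_const (p := 1 / (γ - 1)) (Or.inl hh)).const_mul
    (((γ - 1) / (A * γ)) ^ ((1 : ℝ) / (γ - 1)))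
  refine hderiv.congr_deriv ?_
  rw [rpow_sub_one hh, polytropicDensity, div_mul_eq_div_div _ (γ - 1) h]
  ring

theorem soundSpeed_sq (hAγ : 0 ≤ A * γ) (hρ : 0 ≤ ρ) :
    soundSpeed γ A ρ ^ 2 = A * γ * ρ ^ (γ - 1) := by
  rw [soundSpeed, mul_pow, sq_sqrt hAγ, ← rpow_mul_natCast hρ, Nat.cast_ofNat,
    div_mul_cancel₀ _ two_ne_zero]

theorem soundSpeed_polytropicDensity_sq (hγ : 1 < γ) (hA : 0 < A) (hh : 0 < h) :
    soundSpeed γ A (polytropicDensity γ A h) ^ 2 = (γ - 1) * h := by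
  have hAγ : 0 < A * γ := by positivity
  rw [soundSpeed_sq hAγ.le (polytropicDensity_pos hγ hA hh).le,
    polytropicDensity_rpow hγ hA hh.le, ← mul_assoc, mul_div_cancel₀ _ hAγ.ne']

theorem isRadialSteadyEulerAt_of_hasDerivAt_enthalpy {h U2 : ℝ → ℝ} {r : ℝ}
    (hγ : 1 < γ) (hA : 0 < A) (hh : 0 < h r) (hbalance : HasDerivAt h (U2 r ^ 2 / r) r)
    (hU2 : DifferentiableAt ℝ U2 r) :
    IsRadialSteadyEulerAt γ A (fun s ↦ polytropicDensity γ A (h s)) (fun _ ↦ 0) U2 r := by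
  have hγ' : γ - 1 ≠ 0 := (sub_pos.mpr hγ).ne'
  have hρ : polytropicDensity γ A (h r) ≠ 0 := (polytropicDensity_pos hγ hA hh).ne'
  refine ⟨_, 0, _, (hasDerivAt_polytropicDensity hh.ne').comp r hbalance, hasDerivAt_const r 0,
    hU2.hasDerivAt, by ring, ?_, by ring⟩
  simp only [polytropicDensity_rpow hγ hA hh.le]
  field_simp
  ring

end PolytropicGas

section CirculatoryFlow

variable {γ A B κ r : ℝ}

theorem vacuumRadius_nonneg : 0 ≤ vacuumRadius B κ := by
  unfold vacuumRadius
  positivity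

theorem vacuumRadius_sq (hB : 0 ≤ B) : vacuumRadius B κ ^ 2 = κ ^ 2 / (2 * B) := by
  rw [vacuumRadius, div_pow, sq_abs, sq_sqrt (by positivity)]

theorem sq_sub_vacuumRadius_sq_pos (hr : vacuumRadius B κ < r) :
    0 < r ^ 2 - vacuumRadius B κ ^ 2 :=
  sub_pos.mpr (pow_lt_pow_left₀ hr vacuumRadius_nonneg two_ne_zero)

theorem sonicRadius_nonneg : 0 ≤ sonicRadius γ B κ := by
  unfold sonicRadius
  positivity

theorem sonicRadius_sq_sub_vacuumRadius_sq (hγ : 1 < γ) (hB : 0 < B) :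
    sonicRadius γ B κ ^ 2 - vacuumRadius B κ ^ 2 = κ ^ 2 / ((γ - 1) * B) := by
  have hγ' : 0 < γ - 1 := sub_pos.mpr hγ
  rw [vacuumRadius_sq hB.le, sonicRadius, mul_pow, sq_abs, sq_sqrt (by positivity)]
  field_simp
  ring

theorem vacuumRadius_lt_sonicRadius (hγ : 1 < γ) (hB : 0 < B) (hκ : κ ≠ 0) :
    vacuumRadius B κ < sonicRadius γ B κ := by
  have : 0 < γ - 1 := sub_pos.mpr hγ
  refine lt_of_pow_lt_pow_left₀ 2 sonicRadius_nonneg (sub_pos.mp ?_)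
  rw [sonicRadius_sq_sub_vacuumRadius_sq hγ hB]
  positivity

theorem circulatoryEnthalpy_eq (hB : 0 < B) (hr : r ≠ 0) :
    circulatoryEnthalpy B κ r = B * (r ^ 2 - vacuumRadius B κ ^ 2) / r ^ 2 := by
  rw [circulatoryEnthalpy, vacuumRadius_sq hB.le]
  field_simp

theorem circulatoryEnthalpy_pos (hB : 0 < B) (hr : vacuumRadius B κ < r) :
    0 < circulatoryEnthalpy B κ r := by
  have hr₀ : 0 < r := vacuumRadius_nonneg.trans_lt hr
  have hsq : 0 < r ^ 2 - vacuumRadius B κ ^ 2 := sq_sub_vacuumRadius_sq_pos hr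
  rw [circulatoryEnthalpy_eq hB hr₀.ne']
  positivity

theorem hasDerivAt_circulatoryEnthalpy (hr : r ≠ 0) :
    HasDerivAt (circulatoryEnthalpy B κ) ((κ / r) ^ 2 / r) r := by
  have hden : HasDerivAt (fun s : ℝ ↦ 2 * s ^ 2) (2 * (2 * r)) r := by
    simpa using (hasDerivAt_pow 2 r).const_mul 2
  refine (((hasDerivAt_const r (κ ^ 2)).fun_div hden (by positivity)).const_sub B).congr_deriv ?_
  field_simp
  ring

theorem isRadialSteadyEulerAt_circulatory (hγ : 1 < γ) (hA : 0 < A) (hB : 0 < B)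
    (hr : vacuumRadius B κ < r) :
    IsRadialSteadyEulerAt γ A (fun s ↦ polytropicDensity γ A (circulatoryEnthalpy B κ s))
      (fun _ ↦ 0) (fun s ↦ κ / s) r := by
  have hr₀ : r ≠ 0 := (vacuumRadius_nonneg.trans_lt hr).ne'
  exact isRadialSteadyEulerAt_of_hasDerivAt_enthalpy hγ hA (circulatoryEnthalpy_pos hB hr)
    (hasDerivAt_circulatoryEnthalpy hr₀) (by fun_prop (disch := exact hr₀))

theorem machSq_circulatory_eq (hγ : 1 < γ) (hA : 0 < A) (hB : 0 < B)
    (hr : vacuumRadius B κ < r) :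
    machSq γ A (polytropicDensity γ A (circulatoryEnthalpy B κ r)) 0 (κ / r) =
      (sonicRadius γ B κ ^ 2 - vacuumRadius B κ ^ 2) / (r ^ 2 - vacuumRadius B κ ^ 2) := by
  have hγ' : γ - 1 ≠ 0 := (sub_pos.mpr hγ).ne'
  have hr₀ : r ≠ 0 := (vacuumRadius_nonneg.trans_lt hr).ne'
  rw [machSq, soundSpeed_polytropicDensity_sq hγ hA (circulatoryEnthalpy_pos hB hr),
    circulatoryEnthalpy_eq hB hr₀, sonicRadius_sq_sub_vacuumRadius_sq hγ hB]
  field_simp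
  ring

theorem machSq_circulatory_sonicRadius (hγ : 1 < γ) (hA : 0 < A) (hB : 0 < B) (hκ : κ ≠ 0) :
    machSq γ A (polytropicDensity γ A (circulatoryEnthalpy B κ (sonicRadius γ B κ))) 0
      (κ / sonicRadius γ B κ) = 1 := by
  have hlt := vacuumRadius_lt_sonicRadius hγ hB hκ
  rw [machSq_circulatory_eq hγ hA hB hlt]
  exact div_self (sq_sub_vacuumRadius_sq_pos hlt).ne'

theorem machSq_circulatory_lt_one_iff (hγ : 1 < γ) (hA : 0 < A) (hB : 0 < B)
    (hr : vacuumRadius B κ < r) :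
    machSq γ A (polytropicDensity γ A (circulatoryEnthalpy B κ r)) 0 (κ / r) < 1 ↔
      sonicRadius γ B κ < r := by
  have hr₀ : 0 ≤ r := vacuumRadius_nonneg.trans hr.le
  rw [machSq_circulatory_eq hγ hA hB hr, div_lt_one (sq_sub_vacuumRadius_sq_pos hr),
    sub_lt_sub_iff_right, pow_lt_pow_iff_left₀ sonicRadius_nonneg hr₀ two_ne_zero]

theorem one_lt_machSq_circulatory_iff (hγ : 1 < γ) (hA : 0 < A) (hB : 0 < B)
    (hr : vacuumRadius B κ < r) :
    1 < machSq γ A (polytropicDensity γ A (circulatoryEnthalpy B κ r)) 0 (κ / r) ↔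
      r < sonicRadius γ B κ := by
  have hr₀ : 0 ≤ r := vacuumRadius_nonneg.trans hr.le
  rw [machSq_circulatory_eq hγ hA hB hr, one_lt_div (sq_sub_vacuumRadius_sq_pos hr),
    sub_lt_sub_iff_right, pow_lt_pow_iff_left₀ hr₀ sonicRadius_nonneg two_ne_zero]

end CirculatoryFlow

/-- The purely circulatory flow `U1 ≡ 0`, `U2 = κ2/r`, with the explicit
density, is a solution of the radially symmetric steady Euler system on `(r♯, ∞)`
(with positive density), and its total Mach number crosses `1` exactly at
`r_c = √((γ+1)/(2(γ−1)B0)) |κ2| > r♯`: supersonic below `r_c`, subsonic above. -/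
theorem circulatory_flow
    (γ A0 B0 κ2 rs rc : ℝ) (hγ : 1 < γ) (hA0 : 0 < A0) (hB0 : 0 < B0) (hκ2 : κ2 ≠ 0)
    (hrs : rs = |κ2| / Real.sqrt (2 * B0))
    (hrc : rc = Real.sqrt ((γ + 1) / (2 * (γ - 1) * B0)) * |κ2|)
    (ρ U1 U2 c : ℝ → ℝ)
    (hU1 : ∀ r, U1 r = 0)
    (hU2 : ∀ r, U2 r = κ2 / r)
    (hρ : ∀ r, ρ r = ((γ - 1) / (A0 * γ)) ^ ((1 : ℝ) / (γ - 1))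
      * (B0 - κ2 ^ 2 / (2 * r ^ 2)) ^ ((1 : ℝ) / (γ - 1)))
    (hc : ∀ r, c r = Real.sqrt (A0 * γ) * ρ r ^ ((γ - 1) / 2)) :
    (∀ r, rs < r → 0 < ρ r) ∧
    (∀ r, rs < r → ∃ dρ dU1 dU2 : ℝ,
      HasDerivAt ρ dρ r ∧ HasDerivAt U1 dU1 r ∧ HasDerivAt U2 dU2 r ∧
      dρ * U1 r + ρ r * dU1 + ρ r * U1 r / r = 0 ∧
      U1 r * dU1 + (1 / ρ r) * (A0 * γ * ρ r ^ (γ - 1) * dρ) - (U2 r) ^ 2 / r = 0 ∧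
      U1 r * dU2 + U1 r * U2 r / r = 0) ∧
    rs < rc ∧
    ((U1 rc) ^ 2 + (U2 rc) ^ 2) / (c rc) ^ 2 = 1 ∧
    (∀ r, rc < r → ((U1 r) ^ 2 + (U2 r) ^ 2) / (c r) ^ 2 < 1) ∧
    (∀ r, rs < r → r < rc → 1 < ((U1 r) ^ 2 + (U2 r) ^ 2) / (c r) ^ 2) := by
  obtain rfl : U1 = fun _ ↦ 0 := funext hU1
  obtain rfl : U2 = fun r ↦ κ2 / r := funext hU2
  obtain rfl : c = fun r ↦ soundSpeed γ A0 (ρ r) := funext hc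
  obtain rfl : ρ = fun r ↦ polytropicDensity γ A0 (circulatoryEnthalpy B0 κ2 r) := funext hρ
  obtain rfl : rs = vacuumRadius B0 κ2 := hrs
  obtain rfl : rc = sonicRadius γ B0 κ2 := hrc
  have hlt := vacuumRadius_lt_sonicRadius hγ hB0 hκ2
  exact ⟨fun r hr ↦ polytropicDensity_pos hγ hA0 (circulatoryEnthalpy_pos hB0 hr),
    fun r hr ↦ isRadialSteadyEulerAt_circulatory hγ hA0 hB0 hr,
    hlt,
    machSq_circulatory_sonicRadius hγ hA0 hB0 hκ2,
    fun r hr ↦ (machSq_circulatory_lt_one_iff hγ hA0 hB0 (hlt.trans hr)).mpr hr,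
    fun r hr hr' ↦ (one_lt_machSq_circulatory_iff hγ hA0 hB0 hr).mpr hr'⟩
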